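/- Let S_2≀S_k ≤ S_{2k} be the subgroup of permutations mapping each pair {2i−1,2i} (1 ≤ i ≤ k) to some pair {2j−1,2j}, and let S_2≀A_k be its subgroup of elements whose induced permutation of the k pairs is even. Then: (i) for every k ≥ 25, the permutation character of S_{2k} on the cosets of S_2≀A_k is not multiplicity-free; (ii) for k = 24, the permutation character of S_{48} on the cosets of S_2≀A_{24} IS multiplicity-free. -/

import Mathlib

/-- The permutation character of `G` on the cosets of `H` is multiplicity-free:
every irreducible complex representation of `G` has at most a one-dimensional
subspace of `H`-fixed vectors. -/
noncomputable def IsMultFree {G : Type} [Group G] (H : Subgroup G) : Prop :=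
  ∀ V : FDRep ℂ G, CategoryTheory.Simple V →
    Module.finrank ℂ (Representation.invariants (V.ρ.comp H.subtype)) ≤ 1

/-- `σ` is the permutation of the `k` pairs `{2i−1, 2i}` of `{1,…,2k}` induced by the
permutation `g` (so `g` maps each pair onto a pair, pair `j` going to pair `σ j`). -/
def InducedPairPerm {k : ℕ} (g : Equiv.Perm (Fin (2 * k))) (σ : Equiv.Perm (Fin k)) : Prop :=
  ∀ i : Fin (2 * k), ((g i : ℕ) / 2) = (σ ⟨(i : ℕ) / 2, by have := i.isLt; omega⟩ : ℕ)

/-!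
Let `e` be the idempotent of `ℂ[G]` averaging over `H`. The permutation character on `G ⧸ H` is
multiplicity-free exactly when the Hecke algebra `e ℂ[G] e` is commutative. This is the case when
every double coset of `H` is closed under inversion (Gelfand's trick), and it forces `t * g` and
`g * t` into the same double coset for every `t` normalizing `H`.

For `H = S₂ ≀ A_k` the double cosets are read off from pairs of perfect matchings: superposing a
matching with its image under `g` gives disjoint cycles of lengths `2 mᵢ` with `∑ mᵢ = k`. If the
`mᵢ` are distinct and all congruent to `1` modulo `4`, then every permutation preserving both
matchings induces rotations and reflections of `ZMod mᵢ`, all of which are even; a transposition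
`t` of two pairs then separates the double cosets of `t * g` and `g * t`. In every other case some
symmetry is odd: a rotation if `mᵢ` is even, a reflection if `mᵢ ≡ 3` modulo `4`, the exchange of
two cycles if `mᵢ = mⱼ` is odd. Composing with it, one can correct the parity of the reflection
inverting `g`, so that `g⁻¹` lies in the double coset of `g`.

So for `k ≥ 2` multiplicity-freeness says that `k` is not a sum of distinct numbers congruent to
`1` modulo `4`, and `24` is the last such `k`.
-/

open CategoryTheory Equiv Equiv.Perm MonoidAlgebra
open scoped MonoidAlgebra

universe u v

section Irreducible

variable {k : Type*} [Field k]

lemma isIrreducible_of_simple {G : Type*} [Group G] (V : FDRep k G) [Simple V] :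
    Representation.IsIrreducible V.ρ where
  exists_pair_ne := ⟨⊥, ⊤, fun h => id_nonzero V <| by
    have h' : (⊥ : Submodule k V) = ⊤ := congrArg Subrepresentation.toSubmodule h
    ext v
    exact (Submodule.mem_bot k).1 (h' ▸ Submodule.mem_top : (v : V) ∈ (⊥ : Submodule k V))⟩
  eq_bot_or_eq_top W := by
    let i : FDRep.of W.toRepresentation ⟶ V :=
      ⟨InducedCategory.homMk (ModuleCat.ofHom W.toSubmodule.subtype), fun g => by ext; rfl⟩
    have : Mono i := ConcreteCategory.mono_of_injective _ fun _ _ h => Subtype.ext h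
    by_cases hi : i = 0
    · refine Or.inl (Subrepresentation.toSubmodule_injective (eq_bot_iff.2 fun w hw => ?_))
      have h : i.hom ⟨w, hw⟩ = w := rfl
      rw [hi] at h
      exact h.symm
    · have : IsIso i := (Simple.mono_isIso_iff_nonzero i).2 hi
      refine Or.inr (Subrepresentation.toSubmodule_injective (eq_top_iff.2 fun v _ => ?_))
      have h : (inv i ≫ i).hom v = v := by rw [IsIso.inv_hom_id]; rfl
      exact h ▸ ((inv i).hom v : W.toSubmodule).2

lemma simple_of_isIrreducible {k G V : Type u} [Field k] [IsAlgClosed k] [Group G] [Finite G]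
    [NeZero (Nat.card G : k)] [AddCommGroup V] [Module k V] [FiniteDimensional k V]
    (ρ : Representation k G V) [ρ.IsIrreducible] : Simple (FDRep.of ρ) := by
  rw [FDRep.simple_iff_end_is_rank_one,
    ← (Representation.linHom.invariantsEquivFDRepHom (FDRep.of ρ) (FDRep.of ρ)).finrank_eq]
  exact (Representation.invariantsEquivIntertwiningMap ρ ρ).finrank_eq.trans
    (Representation.IsIrreducible.finrank_intertwiningMap_self ρ)

theorem asAlgebraHom_surjective [IsAlgClosed k] {G V : Type*} [Monoid G] [AddCommGroup V]
    [Module k V] [FiniteDimensional k V] (ρ : Representation k G V) [ρ.IsIrreducible] :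
    Function.Surjective ρ.asAlgebraHom := by
  intro T
  have scalar := (IsSimpleModule.algebraMap_end_bijective_of_isAlgClosed
    (A := k[G]) (V := ρ.asModule) k).surjective
  let f : Module.End (Module.End k[G] ρ.asModule) ρ.asModule :=
    { toFun := T
      map_add' := T.map_add
      map_smul' := fun c v => by obtain ⟨a, rfl⟩ := scalar c; exact T.map_smul a v }
  have : Module.Finite (Module.End k[G] ρ.asModule) ρ.asModule :=
    Module.Finite.of_restrictScalars_finite k _ _
  obtain ⟨a, ha⟩ := Module.Finite.toModuleEnd_moduleEnd_surjective f
  exact ⟨a, LinearMap.ext fun v => congr($ha v)⟩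

lemma isIrreducible_comp {G G' V : Type*} [Monoid G] [Monoid G'] [AddCommGroup V] [Module k V]
    (ρ : Representation k G' V) [ρ.IsIrreducible] {f : G →* G'} (hf : Function.Surjective f) :
    Representation.IsIrreducible (ρ.comp f) where
  exists_pair_ne := ⟨⊥, ⊤, fun h => by
    have h' : (⊥ : Submodule k V) = ⊤ := congrArg Subrepresentation.toSubmodule h
    exact bot_ne_top (α := Subrepresentation ρ) (Subrepresentation.toSubmodule_injective h')⟩
  eq_bot_or_eq_top W := by
    let W' : Subrepresentation ρ := ⟨W.toSubmodule, fun g v hv => by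
      obtain ⟨g, rfl⟩ := hf g
      exact W.apply_mem_toSubmodule g hv⟩
    refine (eq_bot_or_eq_top W').imp (fun h => ?_) fun h => ?_ <;>
    · exact Subrepresentation.toSubmodule_injective (congrArg Subrepresentation.toSubmodule h :)

end Irreducible

section Hecke

variable (k : Type*) [Field k] {G : Type*} [Group G] (H : Subgroup G) [Fintype H]
  [Invertible (Fintype.card H : k)]

/-- The idempotent `e = |H|⁻¹ ∑ h ∈ H, h` of the group algebra `k[G]`. The corner ring `e k[G] e`
that it cuts out is the Hecke algebra of the pair `(G, H)`. -/
noncomputable def heckeIdempotent : k[G] :=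
  mapDomainAlgHom k k H.subtype (GroupAlgebra.average k H)

variable {k H}

lemma of_mul_heckeIdempotent {h : G} (hh : h ∈ H) :
    of k G h * heckeIdempotent k H = heckeIdempotent k H := by
  have := congrArg (mapDomainAlgHom k k H.subtype)
    (GroupAlgebra.mul_average_left k H ⟨h, hh⟩)
  rwa [map_mul, mapDomainAlgHom_apply, mapDomainAlgHom_apply, mapDomain_single] at this

lemma heckeIdempotent_mul_of {h : G} (hh : h ∈ H) :
    heckeIdempotent k H * of k G h = heckeIdempotent k H := by
  have := congrArg (mapDomainAlgHom k k H.subtype)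
    (GroupAlgebra.mul_average_right k H ⟨h, hh⟩)
  rwa [map_mul, mapDomainAlgHom_apply, mapDomainAlgHom_apply, mapDomain_single] at this

lemma asAlgebraHom_heckeIdempotent {V : Type*} [AddCommGroup V] [Module k V]
    (ρ : Representation k G V) :
    ρ.asAlgebraHom (heckeIdempotent k H) = Representation.averageMap (ρ.comp H.subtype) := by
  have h : ρ.asAlgebraHom.comp (mapDomainAlgHom k k H.subtype) =
      Representation.asAlgebraHom (ρ.comp H.subtype) := by ext; simp
  exact congr($h _)

lemma heckeIdempotent_eq_sum :
    heckeIdempotent k H = ⅟(Fintype.card H : k) • ∑ h : H, of k G h := by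
  simp [heckeIdempotent, GroupAlgebra.average]

lemma isIdempotentElem_heckeIdempotent : IsIdempotentElem (heckeIdempotent k H) := by
  rw [IsIdempotentElem]
  nth_rw 1 [heckeIdempotent_eq_sum]
  rw [smul_mul_assoc, Finset.sum_mul,
    Finset.sum_congr rfl fun h _ => of_mul_heckeIdempotent h.2, Finset.sum_const, Finset.card_univ,
    ← Nat.cast_smul_eq_nsmul k, invOf_smul_smul]

lemma heckeIdempotent_mul_of_mul_eq {x y : G} (h : y ∈ DoubleCoset.doubleCoset x H H) :
    heckeIdempotent k H * of k G y * heckeIdempotent k H =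
      heckeIdempotent k H * of k G x * heckeIdempotent k H := by
  obtain ⟨a, ha, b, hb, rfl⟩ := DoubleCoset.mem_doubleCoset.1 h
  rw [map_mul, map_mul, ← mul_assoc, ← mul_assoc, heckeIdempotent_mul_of ha, mul_assoc _ (of k G b),
    of_mul_heckeIdempotent hb]

lemma mem_doubleCoset_of_heckeIdempotent_mul_of_mul_eq {x y : G}
    (h : heckeIdempotent k H * of k G x * heckeIdempotent k H =
      heckeIdempotent k H * of k G y * heckeIdempotent k H) :
    y ∈ DoubleCoset.doubleCoset x H H := by
  let q := mapDomainLinearMap k k (DoubleCoset.mk H H)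
  have hq (z : G) : q (heckeIdempotent k H * of k G z * heckeIdempotent k H) =
      .single (DoubleCoset.mk H H z) 1 := by
    have hz (a b : H) : q (of k G a * of k G z * of k G b) = .single (DoubleCoset.mk H H z) 1 := by
      rw [← map_mul, ← map_mul, of_apply, mapDomainLinearMap_single,
        (DoubleCoset.eq H H z _).2 ⟨a, a.2, b, b.2, rfl⟩]
    simp only [heckeIdempotent_eq_sum, smul_mul_assoc, mul_smul_comm, Finset.sum_mul,
      Finset.mul_sum, map_smul, map_sum, hz, Finset.sum_const, Finset.card_univ,
      ← Nat.cast_smul_eq_nsmul k, invOf_smul_smul]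
  have hxy := (hq x).symm.trans ((congrArg q h).trans (hq y))
  exact DoubleCoset.mem_doubleCoset.2
    ((DoubleCoset.eq H H x y).1 (single_left_injective one_ne_zero hxy))

lemma of_mul_heckeIdempotent_of_mem_normalizer {t : G}
    (ht : t ∈ Subgroup.normalizer (H : Set G)) :
    of k G t * heckeIdempotent k H = heckeIdempotent k H * of k G t := by
  simp only [heckeIdempotent_eq_sum, mul_smul_comm, smul_mul_assoc, Finset.mul_sum, Finset.sum_mul]
  congr 1
  refine Fintype.sum_equiv (H.normalizerMonoidHom ⟨t, ht⟩).toEquiv _ _ fun h => ?_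
  simp

/-- The anti-automorphism of `k[G]` extending `g ↦ g⁻¹`, as a map into the opposite algebra. -/
noncomputable def invOpAlgHom (k G : Type*) [Field k] [Group G] : k[G] →ₐ[k] k[G]ᵐᵒᵖ :=
  lift k _ G (((of k G).op).comp (MulEquiv.inv' G).toMonoidHom)

lemma invOpAlgHom_of (g : G) : invOpAlgHom k G (of k G g) = .op (of k G g⁻¹) := by
  simp [invOpAlgHom]

lemma invOpAlgHom_heckeIdempotent :
    invOpAlgHom k G (heckeIdempotent k H) = .op (heckeIdempotent k H) := by
  simp only [heckeIdempotent_eq_sum, map_smul, map_sum, invOpAlgHom_of, MulOpposite.op_smul,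
    Finset.op_sum]
  congr 1
  exact Fintype.sum_equiv (Equiv.inv H) _ _ fun h => rfl

lemma invOpAlgHom_heckeIdempotent_mul_mul (h : ∀ g : G, g⁻¹ ∈ DoubleCoset.doubleCoset g H H)
    (a : k[G]) :
    invOpAlgHom k G (heckeIdempotent k H * a * heckeIdempotent k H) =
      .op (heckeIdempotent k H * a * heckeIdempotent k H) := by
  induction a using MonoidAlgebra.induction_on with
  | of g =>
    rw [map_mul, map_mul, invOpAlgHom_of, invOpAlgHom_heckeIdempotent, ← MulOpposite.op_mul,
      ← MulOpposite.op_mul, ← mul_assoc, heckeIdempotent_mul_of_mul_eq (h g)]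
  | add a b ha hb => simp only [mul_add, add_mul, map_add, ha, hb, MulOpposite.op_add]
  | smul c a ha => simp only [mul_smul_comm, smul_mul_assoc, map_smul, ha, MulOpposite.op_smul]

end Hecke

section LinearAlgebra

variable {k V : Type*} [Field k] [AddCommGroup V] [Module k V]

theorem finrank_le_one_iff_of_isProj [FiniteDimensional k V] {I : Submodule k V}
    {P : Module.End k V} (hP : LinearMap.IsProj I P) :
    Module.finrank k I ≤ 1 ↔ ∀ S T : Module.End k V, P * S * P * T * P = P * T * P * S * P := by
  constructor
  · intro hI S T
    obtain ⟨v, hv⟩ := finrank_le_one_iff.1 hI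
    have scalar (A : Module.End k V) : ∃ c : k, P * A * P = c • P := by
      obtain ⟨c, hc⟩ := hv (hP.codRestrict (A v))
      refine ⟨c, LinearMap.ext fun x => ?_⟩
      obtain ⟨d, hd⟩ := hv (hP.codRestrict x)
      have hPx : P x = d • (v : V) := congrArg Subtype.val hd.symm
      have hPA : P (A v) = c • (v : V) := congrArg Subtype.val hc.symm
      simp only [Module.End.mul_apply, LinearMap.smul_apply, hPx, map_smul, hPA, smul_comm c d]
    obtain ⟨a, ha⟩ := scalar S
    obtain ⟨b, hb⟩ := scalar T
    calc P * S * P * T * P = (P * S * P) * (T * P) := by simp only [mul_assoc]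
      _ = a • b • P := by rw [ha, smul_mul_assoc, ← mul_assoc, hb]
      _ = (P * T * P) * (S * P) := by rw [hb, smul_mul_assoc, ← mul_assoc, ha, smul_comm]
      _ = P * T * P * S * P := by simp only [mul_assoc]
  · intro h
    rcases subsingleton_or_nontrivial I with _ | _
    · simp [Module.finrank_zero_of_subsingleton]
    obtain ⟨u, hu⟩ := exists_ne (0 : I)
    obtain ⟨f, hf⟩ := Module.Projective.exists_dual_eq_one k (x := (u : V)) (by simpa using hu)
    refine finrank_le_one u fun v => ⟨f v, Subtype.ext ?_⟩
    have huv := congr($(h (f.smulRight (v : V)) (f.smulRight (u : V))) u)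
    simpa [hP.map_id _ u.2, hP.map_id _ v.2, hf] using huv.symm

end LinearAlgebra

lemma asAlgebraHom_ofModule' {k G M : Type*} [Field k] [Monoid G] [AddCommGroup M] [Module k M]
    [Module k[G] M] [IsScalarTower k k[G] M] :
    (Representation.ofModule' (k := k) (G := G) M).asAlgebraHom = Algebra.lsmul k k M :=
  (lift k _ G).apply_symm_apply _

lemma isIrreducible_ofModule' {k G M : Type*} [Field k] [Monoid G] [AddCommGroup M] [Module k M]
    [Module k[G] M] [IsScalarTower k k[G] M] [IsSimpleModule k[G] M] :
    (Representation.ofModule' (k := k) (G := G) M).IsIrreducible := by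
  let ρ := Representation.ofModule' (k := k) (G := G) M
  let e : ρ.asModule ≃ₗ[k[G]] M :=
    { ρ.asModuleEquiv with
      map_smul' := fun a x => (ρ.asModuleEquiv_map_smul a x).trans
        congr($asAlgebraHom_ofModule' a (ρ.asModuleEquiv x)) }
  exact (Representation.irreducible_iff_isSimpleModule_asModule _).2 (IsSimpleModule.congr e)

lemma eq_zero_of_forall_asAlgebraHom_eq_zero {k : Type u} {G : Type v} [Field k] [Group G]
    [Finite G] [NeZero (Nat.card G : k)] {a : k[G]}
    (h : ∀ (V : Type (max u v)) [AddCommGroup V] [Module k V] [FiniteDimensional k V]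
      (ρ : Representation k G V) [ρ.IsIrreducible], ρ.asAlgebraHom a = 0) : a = 0 := by
  rw [← Submodule.mem_bot (R := k[G]), ← IsSemisimpleModule.jacobson_eq_bot, Module.jacobson,
    Submodule.mem_sInf]
  intro m hm
  have : IsSimpleModule k[G] (k[G] ⧸ m) := isSimpleModule_iff_isCoatom.2 hm
  have : (Representation.ofModule' (k := k) (G := G) (k[G] ⧸ m)).IsIrreducible :=
    isIrreducible_ofModule'
  have : FiniteDimensional k (k[G] ⧸ m) := Module.Finite.trans k[G] _
  have ha := congr($(h _ (Representation.ofModule' (k := k) (G := G) (k[G] ⧸ m)))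
    (Submodule.Quotient.mk 1))
  rw [asAlgebraHom_ofModule'] at ha
  simpa [← Submodule.Quotient.mk_smul] using ha

section MultFree

variable {G : Type} [Group G] [Finite G] {H : Subgroup G}

theorem isMultFree_iff_hecke_comm [Fintype H] [Invertible (Fintype.card H : ℂ)] :
    IsMultFree H ↔ ∀ a b : ℂ[G],
      heckeIdempotent ℂ H * a * heckeIdempotent ℂ H * b * heckeIdempotent ℂ H =
        heckeIdempotent ℂ H * b * heckeIdempotent ℂ H * a * heckeIdempotent ℂ H := by
  constructor
  · intro hH a b
    rw [← sub_eq_zero]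
    refine eq_zero_of_forall_asAlgebraHom_eq_zero fun V _ _ _ ρ _ => ?_
    have hI := hH (FDRep.of ρ) (simple_of_isIrreducible ρ)
    have hP := Representation.isProj_averageMap (ρ.comp H.subtype)
    rw [← asAlgebraHom_heckeIdempotent] at hP
    simpa only [map_sub, map_mul, sub_eq_zero] using
      (finrank_le_one_iff_of_isProj hP).1 hI (ρ.asAlgebraHom a) (ρ.asAlgebraHom b)
  · intro h V hV
    have := isIrreducible_of_simple V
    have hP := Representation.isProj_averageMap (V.ρ.comp H.subtype)
    rw [← asAlgebraHom_heckeIdempotent V.ρ] at hP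
    refine (finrank_le_one_iff_of_isProj hP).2 fun S T => ?_
    obtain ⟨a, rfl⟩ := asAlgebraHom_surjective V.ρ S
    obtain ⟨b, rfl⟩ := asAlgebraHom_surjective V.ρ T
    simpa only [map_mul] using congrArg (Representation.asAlgebraHom V.ρ) (h a b)

theorem isMultFree_of_inv_mem_doubleCoset
    (h : ∀ g : G, g⁻¹ ∈ DoubleCoset.doubleCoset g H H) : IsMultFree H := by
  have := Fintype.ofFinite H
  let _ : Invertible (Fintype.card H : ℂ) := invertibleOfNonzero (by simp)
  refine isMultFree_iff_hecke_comm.2 fun a b => ?_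
  set e := heckeIdempotent ℂ H
  have he : e * e = e := isIdempotentElem_heckeIdempotent
  have split (a b : ℂ[G]) : e * a * e * b * e = (e * a * e) * (e * b * e) := by
    rw [← mul_assoc, ← mul_assoc, mul_assoc (e * a) e e, he]
  have anti (x : ℂ[G]) : invOpAlgHom ℂ G (e * x * e) = .op (e * x * e) :=
    invOpAlgHom_heckeIdempotent_mul_mul h x
  apply MulOpposite.op_injective
  calc
    .op (e * a * e * b * e) = invOpAlgHom ℂ G (e * b * e) * invOpAlgHom ℂ G (e * a * e) := by
      rw [split, MulOpposite.op_mul, anti, anti]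
    _ = invOpAlgHom ℂ G (e * (b * e * a) * e) := by
      rw [← map_mul, ← split]; simp only [mul_assoc]
    _ = .op (e * b * e * a * e) := by rw [anti]; simp only [mul_assoc]

theorem IsMultFree.mul_mem_doubleCoset (hH : IsMultFree H) {t : G}
    (ht : t ∈ Subgroup.normalizer (H : Set G)) (g : G) :
    t * g ∈ DoubleCoset.doubleCoset (g * t) H H := by
  have := Fintype.ofFinite H
  let _ : Invertible (Fintype.card H : ℂ) := invertibleOfNonzero (by simp)
  refine mem_doubleCoset_of_heckeIdempotent_mul_of_mul_eq (k := ℂ) ?_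
  set e := heckeIdempotent ℂ H
  have he : e * e = e := isIdempotentElem_heckeIdempotent
  have hte : of ℂ G t * e = e * of ℂ G t := of_mul_heckeIdempotent_of_mem_normalizer ht
  calc
    e * of ℂ G (g * t) * e = e * of ℂ G g * e * of ℂ G t * e := by
      rw [map_mul, mul_assoc _ e (of ℂ G t), ← hte, mul_assoc _ (of ℂ G t * e),
        mul_assoc (of ℂ G t), he, ← mul_assoc, ← mul_assoc]
    _ = e * of ℂ G t * e * of ℂ G g * e := isMultFree_iff_hecke_comm.1 hH _ _
    _ = e * of ℂ G (t * g) * e := by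
      rw [map_mul, mul_assoc e (of ℂ G t) e, hte, ← mul_assoc, he, ← mul_assoc]

theorem IsMultFree.map (hH : IsMultFree H) {G' : Type} [Group G'] {f : G →* G'}
    (hf : Function.Surjective f) : IsMultFree (H.map f) := by
  intro V hV
  have := isIrreducible_of_simple V
  have := isIrreducible_comp V.ρ hf
  have h : Representation.invariants (V.ρ.comp (H.map f).subtype) =
      Representation.invariants ((V.ρ.comp f).comp H.subtype) := by
    ext v
    simp [Representation.mem_invariants]
  rw [h]
  exact hH (FDRep.of (V.ρ.comp f)) (simple_of_isIrreducible _)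

end MultFree

section Sign

section Odd

variable {n q : ℕ}

lemma zmod_two_mul_natCast_add_one (hn : n = 2 * q + 1) : (2 : ZMod n) * (q + 1) = 1 := by
  have h : ((2 * q + 1 : ℕ) : ZMod n) = 0 := by rw [← hn, ZMod.natCast_self]
  push_cast at h
  linear_combination h

lemma sign_addLeft_zmod_of_odd [NeZero n] (hn : n = 2 * q + 1) (a : ZMod n) :
    sign (Equiv.addLeft a) = 1 := by
  have h : Equiv.addLeft a = Equiv.addLeft ((q + 1) * a) * Equiv.addLeft ((q + 1) * a) := by
    ext1 x
    simp only [Perm.mul_apply, Equiv.coe_addLeft]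
    linear_combination (-a) * zmod_two_mul_natCast_add_one hn
  rw [h, map_mul, Int.units_mul_self]

lemma sign_subLeft_zmod_of_odd [NeZero n] (hn : n = 2 * q + 1) (a : ZMod n) :
    sign (Equiv.subLeft a) = (-1) ^ q := by
  have h2 := zmod_two_mul_natCast_add_one hn
  have hfix : Fintype.card (Function.fixedPoints (Equiv.subLeft a)) = 1 := by
    refine Fintype.card_eq_one_iff.2 ⟨⟨(q + 1) * a, ?_⟩, fun ⟨y, hy⟩ => Subtype.ext ?_⟩
    · simp only [Function.mem_fixedPoints, Function.IsFixedPt, Equiv.subLeft_apply]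
      linear_combination (-a) * h2
    · simp only [Function.mem_fixedPoints, Function.IsFixedPt, Equiv.subLeft_apply] at hy ⊢
      linear_combination (-y) * h2 - (q + 1) * hy
  rw [sign_of_pow_two_eq_one (Equiv.ext fun x => sub_sub_cancel a x), hfix, ZMod.card, hn,
    Nat.add_sub_cancel, Nat.mul_div_cancel_left q two_pos]

end Odd

lemma sign_addRight_one_zmod_of_even {n : ℕ} [NeZero n] (hn : Even n) :
    sign (Equiv.addRight (1 : ZMod n)) = -1 := by
  obtain ⟨k, rfl⟩ := Nat.exists_eq_succ_of_ne_zero (NeZero.ne n)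
  have h : sign (Equiv.addRight (1 : ZMod (k + 1))) = sign (finRotate (k + 1)) :=
    sign_eq_sign_of_equiv _ _ (Equiv.refl (Fin (k + 1))) fun x => (finRotate_apply x).symm
  rw [h, sign_finRotate, Odd.neg_one_pow (Nat.not_even_iff_odd.1 fun hk => by grind)]

variable {ι : Type*} [Fintype ι] [DecidableEq ι] {B : ι → Type*} [∀ i, Fintype (B i)]
  [∀ i, DecidableEq (B i)]

lemma sign_sigmaCongrRight_mulSingle (i : ι) (τ : Perm (B i)) :
    sign (Equiv.sigmaCongrRight (Pi.mulSingle i τ)) = sign τ := by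
  rw [← sign_extendDomain τ (Equiv.sigmaSubtype i).symm]
  congr 1
  ext1 ⟨l, b⟩
  by_cases h : l = i
  · subst h
    have hb : Equiv.sigmaCongrRight (Pi.mulSingle l τ) ⟨l, b⟩ = ⟨l, τ b⟩ := by simp
    exact hb.trans (extendDomain_apply_image τ (Equiv.sigmaSubtype l).symm b).symm
  · have := extendDomain_apply_not_subtype τ (Equiv.sigmaSubtype i).symm (b := ⟨l, b⟩) h
    simp [h, this]

lemma sign_sigmaCongrRight (F : ∀ i, Perm (B i)) :
    sign (Equiv.sigmaCongrRight F) = ∏ i, sign (F i) := by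
  have h := Finset.map_noncommProd Finset.univ (fun i => Pi.mulSingle i (F i))
    (fun i _ j _ _ => Pi.mulSingle_apply_commute F i j) (sign.comp (sigmaCongrRightHom B))
  rw [Finset.noncommProd_mulSingle, Finset.noncommProd_eq_prod] at h
  exact h.trans (Finset.prod_congr rfl fun i _ => sign_sigmaCongrRight_mulSingle i (F i))

end Sign

section Shift

/-- The permutation of a disjoint union of cycles `ZMod (m i)` that adds `1` on each of them. It is
the normal form of a permutation with cycle lengths `m i`. -/
def shift {ι : Type*} (m : ι → ℕ) : Perm (Σ i, ZMod (m i)) :=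
  Equiv.sigmaCongrRight fun _ => Equiv.addRight 1

variable {ι : Type*} {m : ι → ℕ}

@[simp]
lemma shift_mk (i : ι) (j : ZMod (m i)) : shift m ⟨i, j⟩ = ⟨i, j + 1⟩ := rfl

lemma iterate_shift_mk (n : ℕ) (i : ι) (j : ZMod (m i)) : (shift m)^[n] ⟨i, j⟩ = ⟨i, j + n⟩ := by
  induction n with
  | zero => simp
  | succ n ih => simp [Function.iterate_succ_apply', ih, add_assoc]

lemma minimalPeriod_shift (y : Σ i, ZMod (m i)) : Function.minimalPeriod (shift m) y = m y.1 := by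
  refine Nat.dvd_right_iff_eq.1 fun n => ?_
  rw [← Function.isPeriodicPt_iff_minimalPeriod_dvd, Function.IsPeriodicPt, Function.IsFixedPt,
    iterate_shift_mk, ← ZMod.natCast_eq_zero_iff]
  simp [Sigma.ext_iff]

theorem exists_semiconj_shift {Z : Type u} [Finite Z] (r : Perm Z) :
    ∃ (ι : Type u) (_ : Fintype ι) (m : ι → ℕ) (_ : ∀ i, NeZero (m i))
      (ψ : (Σ i, ZMod (m i)) ≃ Z), Function.Semiconj ψ (shift m) r := by
  let ι := MulAction.orbitRel.Quotient (Subgroup.zpowers r) Z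
  let ψ := ((MulAction.selfEquivSigmaOrbits (Subgroup.zpowers r) Z).trans
    (Equiv.sigmaCongrRight fun ω => MulAction.orbitZPowersEquiv r ω.out)).symm
  have hψ (ω : ι) (n : ℤ) : ψ ⟨ω, n⟩ = (r ^ n) ω.out :=
    congrArg Subtype.val (MulAction.orbitZPowersEquiv_symm_apply' r ω.out n)
  refine ⟨ι, Fintype.ofFinite ι, _, inferInstance, ψ, fun ⟨ω, j⟩ => ?_⟩
  obtain ⟨n, rfl⟩ := ZMod.intCast_surjective j
  rw [shift_mk, ← Int.cast_one, ← Int.cast_add, hψ, hψ, add_comm, zpow_one_add, Perm.mul_apply]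

end Shift

section PairStabilizer

variable {Y Y' : Type*}

/-- The fixed-point-free involution of `Y × Bool` whose orbits are the pairs
`{(y, false), (y, true)}`. -/
def sheetSwap (Y : Type*) : Perm (Y × Bool) :=
  (Equiv.refl Y).prodCongr Equiv.boolNot

@[simp]
lemma sheetSwap_mk (y : Y) (b : Bool) : sheetSwap Y (y, b) = (y, !b) := rfl

lemma semiconj_fst_mul {x x' : Perm (Y × Bool)} {σ σ' : Perm Y}
    (hx : Function.Semiconj Prod.fst x σ) (hx' : Function.Semiconj Prod.fst x' σ') :
    Function.Semiconj Prod.fst (x * x') (σ * σ') :=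
  hx.comp_right hx'

lemma semiconj_fst_inv {x : Perm (Y × Bool)} {σ : Perm Y} (hx : Function.Semiconj Prod.fst x σ) :
    Function.Semiconj Prod.fst ⇑x⁻¹ ⇑σ⁻¹ :=
  hx.inverses_right x.right_inv σ.left_inv

lemma commute_sheetSwap_of_semiconj_fst {x : Perm (Y × Bool)} {σ : Perm Y}
    (hx : Function.Semiconj Prod.fst x σ) : Commute x (sheetSwap Y) := by
  ext1 ⟨y, b⟩
  have hfst : (x (y, !b)).1 = (x (y, b)).1 := (hx _).trans (hx (y, b)).symm
  have hsnd : (x (y, !b)).2 ≠ (x (y, b)).2 := fun h => by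
    simpa using x.injective (Prod.ext hfst h)
  exact Prod.ext hfst (Bool.eq_not.2 hsnd)

lemma fst_eq_of_semiconj_sheetSwap {Ψ : Y' × Bool → Y × Bool}
    (hΨ : Function.Semiconj Ψ (sheetSwap Y') (sheetSwap Y)) :
    ∀ p, (Ψ p).1 = (Ψ (p.1, false)).1
  | (_, false) => rfl
  | (y, true) => (congrArg Prod.fst (hΨ (y, false)) :)

lemma exists_semiconj_fst_of_semiconj_sheetSwap {Ψ : Y' × Bool ≃ Y × Bool}
    (hΨ : Function.Semiconj Ψ (sheetSwap Y') (sheetSwap Y)) :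
    ∃ η : Y' ≃ Y, ∀ p, (Ψ p).1 = η p.1 := by
  have hΨ' : Function.Semiconj Ψ.symm (sheetSwap Y) (sheetSwap Y') :=
    hΨ.inverse_left Ψ.left_inv Ψ.right_inv
  refine ⟨⟨fun y => (Ψ (y, false)).1, fun y => (Ψ.symm (y, false)).1, fun y => ?_, fun y => ?_⟩,
    fst_eq_of_semiconj_sheetSwap hΨ⟩
  · exact (fst_eq_of_semiconj_sheetSwap hΨ' (Ψ (y, false))).symm.trans
      (congrArg Prod.fst (Ψ.symm_apply_apply _))
  · exact (fst_eq_of_semiconj_sheetSwap hΨ (Ψ.symm (y, false))).symm.trans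
      (congrArg Prod.fst (Ψ.apply_symm_apply _))

/-- The standard pairing: `(i, b)` goes to the `b`-th element of the pair `{2i, 2i + 1}`. -/
def pairEquiv (k : ℕ) : Fin k × Bool ≃ Fin (2 * k) :=
  ((Equiv.refl _).prodCongr finTwoEquiv.symm).trans
    (finProdFinEquiv.trans (finCongr (mul_comm k 2)))

lemma pairEquiv_div_two (k : ℕ) (p : Fin k × Bool) : (pairEquiv k p : ℕ) / 2 = p.1 := by
  simp only [pairEquiv, Equiv.trans_apply, finCongr_apply, Fin.val_cast, finProdFinEquiv_apply_val,
    Equiv.prodCongr_apply, Prod.map_fst, Prod.map_snd, Equiv.refl_apply]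
  omega

lemma inducedPairPerm_permCongr_iff {k : ℕ} {Φ : Y × Bool ≃ Fin (2 * k)} {η : Y ≃ Fin k}
    (hΦ : ∀ p, (Φ p : ℕ) / 2 = η p.1) {x : Perm (Y × Bool)} {σ : Perm Y} :
    InducedPairPerm (Φ.permCongr x) (η.permCongr σ) ↔ Function.Semiconj Prod.fst x σ := by
  refine Φ.surjective.forall.trans (forall_congr' fun p => ?_)
  simp [hΦ, ← Fin.ext_iff]

variable [Fintype Y] [DecidableEq Y]

/-- The subgroup `S₂ ≀ A_Y` of permutations of `Y × Bool` that permute the pairs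
`{(y, false), (y, true)}` by an even permutation of `Y`. -/
def evenPairStabilizer (Y : Type*) [Fintype Y] [DecidableEq Y] : Subgroup (Perm (Y × Bool)) where
  carrier := {x | ∃ σ : Perm Y, Function.Semiconj Prod.fst x σ ∧ sign σ = 1}
  mul_mem' := fun ⟨σ, hx, hσ⟩ ⟨τ, hy, hτ⟩ => ⟨σ * τ, semiconj_fst_mul hx hy, by simp [hσ, hτ]⟩
  one_mem' := ⟨1, fun _ => rfl, map_one sign⟩
  inv_mem' := fun ⟨σ, hx, hσ⟩ => ⟨σ⁻¹, semiconj_fst_inv hx, by simp [hσ]⟩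

lemma mem_evenPairStabilizer {x : Perm (Y × Bool)} :
    x ∈ evenPairStabilizer Y ↔ ∃ σ : Perm Y, Function.Semiconj Prod.fst x σ ∧ sign σ = 1 :=
  Iff.rfl

lemma mem_normalizer_evenPairStabilizer {t : Perm (Y × Bool)} {τ : Perm Y}
    (ht : Function.Semiconj Prod.fst t τ) :
    t ∈ Subgroup.normalizer (evenPairStabilizer Y : Set (Perm (Y × Bool))) := by
  refine Subgroup.mem_normalizer_iff.2 fun x => ⟨fun ⟨σ, hx, hσ⟩ => ?_, fun ⟨σ, hx, hσ⟩ => ?_⟩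
  · exact ⟨τ * σ * τ⁻¹, semiconj_fst_mul (semiconj_fst_mul ht hx) (semiconj_fst_inv ht),
      by simp [hσ]⟩
  · have h := semiconj_fst_mul (semiconj_fst_mul (semiconj_fst_inv ht) hx) ht
    exact ⟨τ⁻¹ * σ * τ, by simpa only [mul_assoc, inv_mul_cancel_left, inv_mul_cancel, mul_one]
      using h, by simp [hσ]⟩

lemma map_evenPairStabilizer {k : ℕ} {Φ : Y × Bool ≃ Fin (2 * k)} {η : Y ≃ Fin k}
    (hΦ : ∀ p, (Φ p : ℕ) / 2 = η p.1) {H : Subgroup (Perm (Fin (2 * k)))}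
    (hH : ∀ g, g ∈ H ↔ ∃ σ : Perm (Fin k), InducedPairPerm g σ ∧ sign σ = 1) :
    (evenPairStabilizer Y).map Φ.permCongrHom.toMonoidHom = H := by
  ext g
  obtain ⟨x, rfl⟩ := Φ.permCongrHom.surjective g
  rw [Subgroup.mem_map_equiv, MulEquiv.symm_apply_apply, hH, mem_evenPairStabilizer,
    η.permCongr.surjective.exists]
  exact exists_congr fun σ =>
    and_congr (inducedPairPerm_permCongr_iff hΦ).symm (by rw [sign_permCongr])

theorem isMultFree_iff_evenPairStabilizer {Y : Type} [Fintype Y] [DecidableEq Y] {k : ℕ}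
    (hY : Fintype.card Y = k) {H : Subgroup (Perm (Fin (2 * k)))}
    (hH : ∀ g, g ∈ H ↔ ∃ σ : Perm (Fin k), InducedPairPerm g σ ∧ sign σ = 1) :
    IsMultFree H ↔ IsMultFree (evenPairStabilizer Y) := by
  let η := Fintype.equivFinOfCardEq hY
  let Φ := (η.prodCongr (Equiv.refl Bool)).trans (pairEquiv k)
  have hΦ (p : Y × Bool) : (Φ p : ℕ) / 2 = η p.1 := pairEquiv_div_two k _
  rw [← map_evenPairStabilizer hΦ hH]
  refine ⟨fun h => ?_, fun h => h.map Φ.permCongrHom.surjective⟩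
  have hsymm := h.map (f := Φ.permCongrHom.symm.toMonoidHom) Φ.permCongrHom.symm.surjective
  rwa [Subgroup.map_map, MulEquiv.toMonoidHom_eq_coe, MulEquiv.toMonoidHom_eq_coe,
    MulEquiv.coe_monoidHom_symm_comp_coe_monoidHom, Subgroup.map_id] at hsymm

end PairStabilizer

section Shear

variable {Y : Type*}

/-- The permutation of `Y × Bool` acting as `r` on the sheet `true` and trivially on the sheet
`false`. These permutations represent all double cosets of the stabilizer of the pairs. -/
def shear (r : Perm Y) : Perm (Y × Bool) :=
  Equiv.prodCongrLeft fun b => bif b then r else 1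

/-- The permutation of `Y × Bool` acting as `r` on the sheet `false` and as `r⁻¹` on the sheet
`true`, which is the product of the involutions `sheetSwap Y` and its conjugate by `shear r`. -/
def counterRotation (r : Perm Y) : Perm (Y × Bool) :=
  Equiv.prodCongrLeft fun b => bif b then r⁻¹ else r

lemma counterRotation_mk (r : Perm Y) (y : Y) (b : Bool) :
    counterRotation r (y, b) = ((bif b then r⁻¹ else r) y, b) := rfl

lemma sheetSwap_mul_conj_shear (r : Perm Y) :
    sheetSwap Y * (shear r * sheetSwap Y * (shear r)⁻¹) = counterRotation r := by
  ext1 ⟨y, b⟩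
  cases b <;> rfl

lemma commute_counterRotation {r : Perm Y} {x x' : Perm (Y × Bool)} {σ σ' : Perm Y}
    (hx : Function.Semiconj Prod.fst x σ) (hx' : Function.Semiconj Prod.fst x' σ')
    (h : x * shear r = shear r * x') : Commute x (counterRotation r) := by
  have hconj : Commute x (shear r * sheetSwap Y * (shear r)⁻¹) := by
    rw [eq_mul_inv_of_mul_eq h, Commute.conj_iff]
    exact commute_sheetSwap_of_semiconj_fst hx'
  rw [← sheetSwap_mul_conj_shear]
  exact (commute_sheetSwap_of_semiconj_fst hx).mul_right hconj

lemma minimalPeriod_eq_of_semiconj_of_injective {α β : Type*} {f : α → α} {g : β → β}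
    {e : α → β} (h : Function.Semiconj e f g) (he : Function.Injective e) (a : α) :
    Function.minimalPeriod g (e a) = Function.minimalPeriod f a :=
  Function.minimalPeriod_eq_minimalPeriod_iff.2 fun n =>
    ⟨fun hn => he ((h.iterate_right n a).trans hn), fun hn => hn.map h⟩

lemma minimalPeriod_perm_inv (r : Perm Y) (y : Y) :
    Function.minimalPeriod ⇑r⁻¹ y = Function.minimalPeriod r y :=
  Function.minimalPeriod_eq_minimalPeriod_iff.2 fun n => by
    rw [Function.IsPeriodicPt, Function.IsPeriodicPt, Function.IsFixedPt, Function.IsFixedPt,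
      iterate_eq_pow, iterate_eq_pow, inv_pow, inv_eq_iff_eq, eq_comm]

lemma minimalPeriod_counterRotation (r : Perm Y) (p : Y × Bool) :
    Function.minimalPeriod (counterRotation r) p = Function.minimalPeriod r p.1 := by
  obtain ⟨y, b⟩ := p
  refine (minimalPeriod_eq_of_semiconj_of_injective (e := fun y => (y, b))
    (fun y => (counterRotation_mk r y b).symm) (Prod.mk_left_injective b) y).trans ?_
  cases b
  · rfl
  · exact minimalPeriod_perm_inv r y

section Commute

variable {r σ : Perm Y} {x : Perm (Y × Bool)} (hx : Function.Semiconj Prod.fst x σ)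
  (hc : Commute x (counterRotation r))
include hx hc

lemma minimalPeriod_apply_of_commute_counterRotation (y : Y) :
    Function.minimalPeriod r (σ y) = Function.minimalPeriod r y := by
  have h := minimalPeriod_eq_of_semiconj_of_injective (f := counterRotation r)
    (g := counterRotation r) (Perm.ext_iff.1 hc.eq) x.injective (y, false)
  rw [minimalPeriod_counterRotation, minimalPeriod_counterRotation] at h
  exact (congrArg (Function.minimalPeriod r) (hx (y, false)).symm).trans h

lemma apply_false_of_commute_counterRotation (y : Y) :
    x (r y, false) = ((bif (x (y, false)).2 then r⁻¹ else r) (σ y), (x (y, false)).2) := by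
  rw [← hx (y, false)]
  exact Perm.ext_iff.1 hc.eq (y, false)

end Commute

lemma zmod_apply_eq_iterate {n : ℕ} [NeZero n] {S : Type*} {f : ZMod n → S} {T : S → S}
    (hf : Function.Semiconj f (· + 1) T) (j : ZMod n) : f j = T^[j.val] (f 0) := by
  simpa using hf.iterate_right j.val 0

lemma zmod_apply_eq_of_forall_add_one {n : ℕ} [NeZero n] {f : ZMod n → ZMod n} {c : ZMod n}
    (hf : ∀ j, f (j + 1) = f j + c) (j : ZMod n) : f j = f 0 + j * c := by
  simpa using zmod_apply_eq_iterate (T := (· + c)) hf j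

lemma sign_eq_one_of_forall_add_one {n : ℕ} (hn : n % 4 = 1) [NeZero n] {f : Perm (ZMod n)}
    {b : Bool} (hf : ∀ j, f (j + 1) = f j + bif b then -1 else 1) : sign f = 1 := by
  have h := zmod_apply_eq_of_forall_add_one hf
  have hq : n = 2 * (2 * (n / 4)) + 1 := by omega
  cases b
  · have : f = Equiv.addLeft (f 0) := Equiv.ext fun j => by simpa using h j
    rw [this, sign_addLeft_zmod_of_odd hq]
  · have : f = Equiv.subLeft (f 0) := Equiv.ext fun j => by simpa [sub_eq_add_neg] using h j
    rw [this, sign_subLeft_zmod_of_odd hq, Even.neg_one_pow (even_two_mul _)]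

variable {ι : Type*} {m : ι → ℕ}

lemma cond_shift_mk (b : Bool) (i : ι) (j : ZMod (m i)) :
    (bif b then (shift m)⁻¹ else shift m) ⟨i, j⟩ = ⟨i, j + bif b then -1 else 1⟩ := by
  cases b <;> rfl

lemma exists_sigmaCongrRight_eq {B : ι → Type*} {σ : Perm (Σ i, B i)}
    (hσ : ∀ y, (σ y).1 = y.1) : ∃ F : ∀ i, Perm (B i), Equiv.sigmaCongrRight F = σ := by
  refine ⟨fun i => (Equiv.sigmaSubtype i).permCongr (σ.subtypePerm fun y => by rw [hσ]), ?_⟩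
  ext1 ⟨i, b⟩
  exact congrArg Subtype.val ((Equiv.sigmaSubtype i).symm_apply_apply ⟨σ ⟨i, b⟩, hσ _⟩)

theorem sign_eq_one_of_commute_counterRotation [Fintype ι] [DecidableEq ι] [∀ i, NeZero (m i)]
    (hinj : Function.Injective m) (hm : ∀ i, m i % 4 = 1) {σ : Perm (Σ i, ZMod (m i))}
    {x : Perm ((Σ i, ZMod (m i)) × Bool)} (hx : Function.Semiconj Prod.fst x σ)
    (hc : Commute x (counterRotation (shift m))) : sign σ = 1 := by
  have hfiber (y) : (σ y).1 = y.1 := hinj <| by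
    simpa only [minimalPeriod_shift] using minimalPeriod_apply_of_commute_counterRotation hx hc y
  obtain ⟨F, rfl⟩ := exists_sigmaCongrRight_eq hfiber
  have hstep := apply_false_of_commute_counterRotation hx hc
  have hsheet (i) (j : ZMod (m i)) : (x (⟨i, j⟩, false)).2 = (x (⟨i, 0⟩, false)).2 := by
    simpa using zmod_apply_eq_iterate (f := fun j => (x (⟨i, j⟩, false)).2) (T := id)
      (fun j => (congrArg Prod.snd (hstep ⟨i, j⟩) :)) j
  rw [sign_sigmaCongrRight]
  refine Finset.prod_eq_one fun i _ => sign_eq_one_of_forall_add_one (hm i)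
    (b := (x (⟨i, 0⟩, false)).2) fun j => ?_
  have h := congrArg Prod.fst (hstep ⟨i, j⟩)
  rw [hx, hsheet] at h
  simpa [cond_shift_mk] using h

theorem not_isMultFree_evenPairStabilizer {ι : Type} {m : ι → ℕ} [Fintype ι] [DecidableEq ι]
    [∀ i, NeZero (m i)] [Nontrivial (Σ i, ZMod (m i))] (hinj : Function.Injective m)
    (hm : ∀ i, m i % 4 = 1) : ¬ IsMultFree (evenPairStabilizer (Σ i, ZMod (m i))) := by
  intro hfree
  obtain ⟨y, z, hyz⟩ := exists_pair_ne (Σ i, ZMod (m i))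
  let t : Perm ((Σ i, ZMod (m i)) × Bool) := (swap y z).prodCongr (Equiv.refl Bool)
  have ht : Function.Semiconj Prod.fst t (swap y z) := fun _ => rfl
  obtain ⟨a, ⟨σ, ha, hσ⟩, b, ⟨σ', hb, _⟩, h⟩ := DoubleCoset.mem_doubleCoset.1
    (hfree.mul_mem_doubleCoset (mem_normalizer_evenPairStabilizer ht) (shear (shift m)))
  have hcomm : a⁻¹ * t * shear (shift m) = shear (shift m) * (t * b) := by
    rw [mul_assoc, h]; group
  have hfst := semiconj_fst_mul (semiconj_fst_inv ha) ht
  have heven := sign_eq_one_of_commute_counterRotation hinj hm hfst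
    (commute_counterRotation hfst (semiconj_fst_mul ht hb) hcomm)
  simp [hσ, sign_swap hyz] at heven

end Shear

section Reversal

variable {Y : Type*}

/-- A permutation `σ` of `Y` reverses the shear of `r` if it is induced by a permutation `z` of the
pairs with `z * shear r * z = (shear r)⁻¹`, written here without inverses. -/
def ReversesShear (r σ : Perm Y) : Prop :=
  ∃ z : Perm (Y × Bool), Function.Semiconj Prod.fst z σ ∧ (shear r * z) * (shear r * z) = 1

lemma reversesShear_of_mul_self {r σ : Perm Y} (hσ : σ * σ = 1)
    (hrσ : (r * σ) * (r * σ) = 1) : ReversesShear r σ := by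
  refine ⟨σ.prodCongr (Equiv.refl Bool), fun _ => rfl, Equiv.ext fun ⟨y, b⟩ => ?_⟩
  cases b
  · exact Prod.ext (Perm.ext_iff.1 hσ y) rfl
  · exact Prod.ext (Perm.ext_iff.1 hrσ y) rfl

section Embedding

variable {X : Type*} [Fintype X] [DecidableEq Y] {w : X ↪ Y}

lemma commute_viaFintypeEmbedding {e d : Perm X} {c : Perm Y}
    (hw : Function.Semiconj w d c) (h : Commute e d) : Commute (e.viaFintypeEmbedding w) c := by
  ext1 y
  simp only [Perm.mul_apply]
  by_cases hy : y ∈ Set.range w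
  · obtain ⟨x, rfl⟩ := hy
    rw [← hw, viaFintypeEmbedding_apply_image, viaFintypeEmbedding_apply_image, ← hw]
    exact congrArg w (Perm.ext_iff.1 h.eq x)
  · have hcy : c y ∉ Set.range w := fun ⟨x, hx⟩ => hy ⟨d.symm x, c.injective <| by
      rw [← hw, Equiv.apply_symm_apply, hx]⟩
    rw [viaFintypeEmbedding_apply_notMem_range _ _ hy,
      viaFintypeEmbedding_apply_notMem_range _ _ hcy]

lemma viaFintypeEmbedding_mul_self {e : Perm X} (he : e * e = 1) :
    e.viaFintypeEmbedding w * e.viaFintypeEmbedding w = 1 := by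
  rw [viaFintypeEmbedding, extendDomain_mul, he, extendDomain_one]

end Embedding

lemma sign_sheetSwap (X : Type*) [Fintype X] [DecidableEq X] :
    sign (sheetSwap X) = (-1) ^ Fintype.card X :=
  (sign_prodCongrRight fun _ : X => Equiv.boolNot).trans <| Finset.prod_const _

/-- The permutation of a disjoint union of cycles `ZMod (m i)` that negates every coordinate. -/
def reflection {ι : Type*} (m : ι → ℕ) : Perm (Σ i, ZMod (m i)) :=
  Equiv.sigmaCongrRight fun _ => Equiv.neg _

variable {ι : Type*} {m : ι → ℕ}

@[simp]
lemma reflection_mk (i : ι) (j : ZMod (m i)) : reflection m ⟨i, j⟩ = ⟨i, -j⟩ := rfl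

lemma reflection_mul_self : reflection m * reflection m = 1 := by
  ext1 ⟨i, j⟩
  simp

lemma shift_mul_reflection_mul_self : (shift m * reflection m) * (shift m * reflection m) = 1 := by
  ext1 ⟨i, j⟩
  simp

lemma reversesShear_reflection : ReversesShear (shift m) (reflection m) :=
  reversesShear_of_mul_self reflection_mul_self shift_mul_reflection_mul_self

variable [Fintype ι] [DecidableEq ι] [∀ i, NeZero (m i)]

lemma exists_reversesShear_of_even {i : ι} (hi : Even (m i)) :
    ∃ σ, sign σ = - sign (reflection m) ∧ ReversesShear (shift m) σ := by
  let p : Perm (Σ i, ZMod (m i)) := Equiv.sigmaCongrRight (Pi.mulSingle i (Equiv.addRight 1))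
  refine ⟨p * reflection m, ?_, reversesShear_of_mul_self ?_ ?_⟩
  · rw [map_mul, sign_sigmaCongrRight_mulSingle, sign_addRight_one_zmod_of_even hi, neg_one_mul]
  all_goals
    ext1 ⟨l, j⟩
    obtain rfl | h := eq_or_ne l i
    · simp [p]
    · simp [p, h]

lemma exists_reversesShear_of_mod_four {i : ι} (hi : m i % 4 = 3) :
    ∃ σ, sign σ = - sign (reflection m) ∧ ReversesShear (shift m) σ := by
  obtain ⟨q, hq⟩ : ∃ q, m i = 2 * (2 * q + 1) + 1 := ⟨m i / 4, by omega⟩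
  obtain ⟨e, he⟩ : ∃ e : ZMod (m i), 2 * e = -1 :=
    ⟨_, by rw [← zmod_two_mul_natCast_add_one hq, ← mul_neg]⟩
  let p : Perm (Σ i, ZMod (m i)) := Equiv.sigmaCongrRight (Pi.mulSingle i (Equiv.subLeft e))
  let w : Perm ((Σ i, ZMod (m i)) × Bool) :=
    Equiv.prodCongrRight fun y => if y.1 = i then Equiv.boolNot else 1
  refine ⟨p * reflection m, ?_, ((p * reflection m).prodCongr (Equiv.refl Bool)) * w,
    fun _ => rfl, ?_⟩
  · rw [map_mul, sign_sigmaCongrRight_mulSingle, sign_subLeft_zmod_of_odd hq,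
      Odd.neg_one_pow (odd_two_mul_add_one q), neg_one_mul]
  ext1 ⟨⟨l, j⟩, b⟩
  obtain rfl | h := eq_or_ne l i
  · have h_false : e - (-1 + (-j + -e)) = j := by linear_combination he
    have h_true : e - (-j + -e) + 1 = j := by linear_combination he
    cases b <;> simp [p, w, shear, h_false, h_true]
  · cases b <;> simp [p, w, h, shear]

lemma exists_reversesShear_of_eq {i i' : ι} (hne : i ≠ i') (h : m i = m i') (hi : Odd (m i)) :
    ∃ σ, sign σ = - sign (reflection m) ∧ ReversesShear (shift m) σ := by
  let w : ZMod (m i) × Bool ↪ Σ i, ZMod (m i) :=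
    ⟨fun p => bif p.2 then ⟨i', ZMod.ringEquivCongr h p.1⟩ else ⟨i, p.1⟩, by
      rintro ⟨j, _ | _⟩ ⟨j', _ | _⟩ hj <;> simp_all [hne.symm]⟩
  have hw_false (j : ZMod (m i)) : w (j, false) = ⟨i, j⟩ := rfl
  have hw_true (j : ZMod (m i)) : w (j, true) = ⟨i', ZMod.ringEquivCongr h j⟩ := rfl
  let p := (sheetSwap (ZMod (m i))).viaFintypeEmbedding w
  have hp : p * p = 1 := viaFintypeEmbedding_mul_self (by ext1 ⟨j, b⟩; simp)
  have hshift : Commute p (shift m) := by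
    refine commute_viaFintypeEmbedding (d := (Equiv.addRight 1).prodCongr (Equiv.refl Bool)) ?_
      (Equiv.ext fun _ => rfl)
    rintro ⟨j, _ | _⟩ <;> simp [hw_false, hw_true]
  have hrefl : Commute p (reflection m) := by
    refine commute_viaFintypeEmbedding (d := (Equiv.neg _).prodCongr (Equiv.refl Bool)) ?_
      (Equiv.ext fun _ => rfl)
    rintro ⟨j, _ | _⟩ <;> simp [hw_false, hw_true]
  refine ⟨p * reflection m, ?_, reversesShear_of_mul_self ?_ ?_⟩
  · rw [map_mul, viaFintypeEmbedding_sign, sign_sheetSwap, ZMod.card, hi.neg_one_pow, neg_one_mul]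
  · rw [hrefl.symm.mul_mul_mul_comm, hp, reflection_mul_self, one_mul]
  · have hcomm : shift m * (p * reflection m) = p * (shift m * reflection m) :=
      hshift.symm.left_comm _
    rw [hcomm, (hshift.mul_right hrefl).symm.mul_mul_mul_comm, hp, shift_mul_reflection_mul_self,
      one_mul]

theorem exists_reversesShear (h : ¬ (Function.Injective m ∧ ∀ i, m i % 4 = 1)) (ε : ℤˣ) :
    ∃ σ, sign σ = ε ∧ ReversesShear (shift m) σ := by
  have hneg : ∃ σ, sign σ = - sign (reflection m) ∧ ReversesShear (shift m) σ := by
    by_cases hm : ∀ i, m i % 4 = 1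
    · obtain ⟨i, i', heq, hne⟩ := Function.not_injective_iff.1 fun hinj => h ⟨hinj, hm⟩
      exact exists_reversesShear_of_eq hne heq <|
        Nat.odd_iff.2 (Nat.odd_of_mod_four_eq_one (hm i))
    · obtain ⟨i, hi⟩ := not_forall.1 hm
      obtain heven | hodd := (m i).even_or_odd
      · exact exists_reversesShear_of_even heven
      · exact exists_reversesShear_of_mod_four ((Nat.odd_mod_four_iff.1
          (Nat.odd_iff.1 hodd)).resolve_left hi)
  obtain rfl | rfl : ε = sign (reflection m) ∨ ε = -sign (reflection m) :=
    or_iff_not_imp_left.2 Int.units_ne_iff_eq_neg.1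
  · exact ⟨_, rfl, reversesShear_reflection⟩
  · exact hneg

end Reversal

section NormalForm

lemma exists_transversal {Q : Type*} {φ : Q → Q} (hφ : Function.Involutive φ)
    (hne : ∀ q, φ q ≠ q) : ∃ P : Set Q, ∀ q, φ q ∈ P ↔ q ∉ P := by
  let : LinearOrder Q := IsWellOrder.linearOrder WellOrderingRel
  refine ⟨{q | q < φ q}, fun q => ?_⟩
  rw [Set.mem_ofPred_eq, Set.mem_ofPred_eq, hφ q, not_lt]
  exact (hne q).le_iff_lt.symm

lemma exists_equiv_prod_bool {X : Type*} {f : Perm X} (hf : f * f = 1) {P : Set X}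
    (hP : ∀ x, f x ∈ P ↔ x ∉ P) :
    ∃ Θ : P × Bool ≃ X, ∀ x, Θ (x, false) = x ∧ Θ (x, true) = f x := by
  let F : P × Bool → X := fun p => bif p.2 then f p.1 else p.1
  have hF : Function.Bijective F := by
    refine ⟨?_, fun x => ?_⟩
    · rintro ⟨x, _ | _⟩ ⟨y, _ | _⟩ h
      · exact Prod.ext (Subtype.ext h) rfl
      · exact ((hP y).1 (h.subst (motive := (· ∈ P)) x.2) y.2).elim
      · exact ((hP x).1 (h.symm.subst (motive := (· ∈ P)) y.2) x.2).elim
      · exact Prod.ext (Subtype.ext (f.injective h)) rfl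
    · by_cases hx : x ∈ P
      · exact ⟨(⟨x, hx⟩, false), rfl⟩
      · exact ⟨(⟨f x, (hP x).2 hx⟩, true), Perm.ext_iff.1 hf x⟩
  exact ⟨Equiv.ofBijective F hF, fun _ => ⟨rfl, rfl⟩⟩

section Involutions

variable {X : Type u} {f f' : Perm X} (hf : f * f = 1) (hf' : f' * f' = 1)
include hf hf'

lemma apply_zpow_mul_of_mul_self (n : ℤ) (x : X) :
    f (((f * f') ^ n) x) = ((f * f') ^ (-n)) (f x) := by
  have hconj : f * (f * f') * f⁻¹ = (f * f')⁻¹ := by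
    rw [mul_inv_rev, inv_eq_of_mul_eq_one_right hf, inv_eq_of_mul_eq_one_right hf', ← mul_assoc,
      hf, one_mul]
  have h : f * (f * f') ^ n = (f * f') ^ (-n) * f := by
    rw [← inv_zpow', ← hconj, conj_zpow, inv_mul_cancel_right]
  exact Perm.ext_iff.1 h x

lemma sameCycle_apply_of_mul_self {x y : X} (h : SameCycle (f * f') x y) :
    SameCycle (f * f') (f x) (f y) := by
  obtain ⟨n, rfl⟩ := h
  exact ⟨-n, (apply_zpow_mul_of_mul_self hf hf' n x).symm⟩

variable (hne : ∀ x, f x ≠ x) (hne' : ∀ x, f' x ≠ x)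
include hne hne'

lemma not_sameCycle_apply_of_mul_self (x : X) : ¬ SameCycle (f * f') x (f x) := by
  rintro ⟨j, hj⟩
  have hfx (n : ℤ) : f (((f * f') ^ n) x) = ((f * f') ^ (j - n)) x := by
    rw [apply_zpow_mul_of_mul_self hf hf', ← hj, ← Perm.mul_apply, ← zpow_add, neg_add_eq_sub]
  obtain ⟨n, rfl | rfl⟩ := Int.even_or_odd' j
  · refine hne _ ((hfx n).trans ?_)
    rw [two_mul, add_sub_cancel_right]
  · have hf'_eq : f' = f * (f * f') := by rw [← mul_assoc, hf, one_mul]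
    refine hne' (((f * f') ^ n) x) ?_
    nth_rewrite 1 [hf'_eq]
    rw [Perm.mul_apply, ← Perm.mul_apply (f * f'), ← zpow_one_add, hfx]
    congr 2
    ring

lemma exists_invariant_transversal :
    ∃ P : Set X, (∀ x, (f * f') x ∈ P ↔ x ∈ P) ∧ ∀ x, f x ∈ P ↔ x ∉ P := by
  let φ : Quotient (SameCycle.setoid (f * f')) → Quotient (SameCycle.setoid (f * f')) :=
    Quotient.map f fun _ _ => sameCycle_apply_of_mul_self hf hf'
  have hφ : Function.Involutive φ :=
    Quotient.ind fun x => congrArg (Quotient.mk _) (Perm.ext_iff.1 hf x)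
  have hφ_ne : ∀ q, φ q ≠ q := Quotient.ind fun x h =>
    not_sameCycle_apply_of_mul_self hf hf' hne hne' x (Quotient.exact h).symm
  obtain ⟨P, hP⟩ := exists_transversal hφ hφ_ne
  refine ⟨Quotient.mk _ ⁻¹' P, fun x => ?_, fun x => hP ⟦x⟧⟩
  have hx : (⟦(f * f') x⟧ : Quotient (SameCycle.setoid (f * f'))) = ⟦x⟧ :=
    Quotient.sound (SameCycle.refl _ x).apply_left
  rw [Set.mem_preimage, Set.mem_preimage, hx]

theorem exists_semiconj_sheetSwap [Finite X] :
    ∃ (ι : Type u) (_ : Fintype ι) (m : ι → ℕ) (_ : ∀ i, NeZero (m i))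
      (Ψ : (Σ i, ZMod (m i)) × Bool ≃ X), Function.Semiconj Ψ (sheetSwap _) f ∧
        Function.Semiconj (Ψ ∘ shear (shift m)) (sheetSwap _) f' := by
  obtain ⟨P, hcP, hfP⟩ := exists_invariant_transversal hf hf' hne hne'
  obtain ⟨ι, _, m, _, ψ, hψ⟩ := exists_semiconj_shift ((f * f').subtypePerm hcP)
  obtain ⟨Θ, hΘ⟩ := exists_equiv_prod_bool hf hfP
  let Ψ := (ψ.prodCongr (Equiv.refl Bool)).trans Θ
  have hΨ_false (y) : Ψ (y, false) = ψ y := (hΘ (ψ y)).1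
  have hΨ_true (y) : Ψ (y, true) = f (ψ y) := (hΘ (ψ y)).2
  have hff (x) : f (f x) = x := Perm.ext_iff.1 hf x
  have hff' (x) : f' (f' x) = x := Perm.ext_iff.1 hf' x
  have hstep (y) : f' (ψ y) = f (ψ (shift m y)) :=
    (hff _).symm.trans (congrArg (f ∘ Subtype.val) (hψ y).symm)
  refine ⟨ι, ‹_›, m, ‹_›, Ψ, ?_, ?_⟩
  · rintro ⟨y, _ | _⟩
    · exact (hΨ_true y).trans (congrArg f (hΨ_false y).symm)
    · exact (hΨ_false y).trans ((hff _).symm.trans (congrArg f (hΨ_true y).symm))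
  · rintro ⟨y, _ | _⟩
    · exact (hΨ_true _).trans ((hstep y).symm.trans (congrArg f' (hΨ_false y).symm))
    · refine (hΨ_false y).trans ((hff' _).symm.trans (congrArg f' ?_))
      rw [hstep]
      exact (hΨ_true _).symm

end Involutions

theorem exists_apply_eq_shear {Y : Type u} [Finite Y] (g : Perm (Y × Bool)) :
    ∃ (ι : Type u) (_ : Fintype ι) (m : ι → ℕ) (_ : ∀ i, NeZero (m i))
      (Ψ Ω : (Σ i, ZMod (m i)) × Bool ≃ Y × Bool),
      Function.Semiconj Ψ (sheetSwap _) (sheetSwap Y) ∧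
        Function.Semiconj Ω (sheetSwap _) (sheetSwap Y) ∧
        ∀ p, g (Ω p) = Ψ (shear (shift m) p) := by
  have hmul : sheetSwap Y * sheetSwap Y = 1 := by
    ext1 ⟨y, b⟩
    simp
  have hne (p : Y × Bool) : sheetSwap Y p ≠ p := fun h => Bool.not_ne_self p.2 (congrArg Prod.snd h)
  obtain ⟨ι, _, m, _, Ψ, hΨ, hΨs⟩ := exists_semiconj_sheetSwap hmul
    (f' := g * sheetSwap Y * g⁻¹) (by rw [conj_mul, hmul, mul_one, mul_inv_cancel]) hne
    fun p h => hne (g⁻¹ p) (eq_inv_iff_eq.2 h)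
  refine ⟨ι, ‹_›, m, ‹_›, Ψ, ((shear (shift m)).trans Ψ).trans g.symm, hΨ, fun p => ?_,
    fun p => g.apply_symm_apply _⟩
  exact g.symm_apply_eq.2 (hΨs p)

end NormalForm

section DoubleCoset

variable {Y Y' : Type*} [Fintype Y] [DecidableEq Y] [Fintype Y'] [DecidableEq Y']

theorem inv_mem_doubleCoset_evenPairStabilizer {r : Perm Y'} {g : Perm (Y × Bool)}
    {Ψ Ω : Y' × Bool ≃ Y × Bool} (hΨ : Function.Semiconj Ψ (sheetSwap Y') (sheetSwap Y))
    (hΩ : Function.Semiconj Ω (sheetSwap Y') (sheetSwap Y))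
    (hg : ∀ p, g (Ω p) = Ψ (shear r p)) (hr : ∀ ε : ℤˣ, ∃ σ, sign σ = ε ∧ ReversesShear r σ) :
    g⁻¹ ∈ DoubleCoset.doubleCoset g (evenPairStabilizer Y : Set (Perm (Y × Bool)))
      (evenPairStabilizer Y) := by
  obtain ⟨ηΨ, hηΨ⟩ := exists_semiconj_fst_of_semiconj_sheetSwap hΨ
  obtain ⟨ηΩ, hηΩ⟩ := exists_semiconj_fst_of_semiconj_sheetSwap hΩ
  let τ : Perm Y := ηΨ.symm.trans ηΩ
  obtain ⟨σ, hσ, z, hz, hz_rev⟩ := hr (sign τ)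
  let a : Perm (Y × Bool) := Ψ.symm.trans (z.trans Ω)
  have ha : a ∈ evenPairStabilizer Y := by
    refine ⟨τ * ηΨ.permCongr σ, Ψ.surjective.forall.2 fun p => ?_, ?_⟩
    · simp [a, τ, hηΨ, hηΩ, ← hz p]
    · rw [map_mul, sign_permCongr, hσ, Int.units_mul_self]
  refine DoubleCoset.mem_doubleCoset.2 ⟨a, ha, a, ha, inv_eq_of_mul_eq_one_right ?_⟩
  have hrev (p) : shear r (z (shear r (z p))) = p := Perm.ext_iff.1 hz_rev p
  exact Equiv.ext <| Ψ.surjective.forall.2 fun p => by simp [a, hg, hrev]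

end DoubleCoset

theorem isMultFree_evenPairStabilizer {Y : Type} [Fintype Y] [DecidableEq Y]
    (hY : ∀ S : Finset ℕ, (∀ m ∈ S, m % 4 = 1) → ∑ m ∈ S, m ≠ Fintype.card Y) :
    IsMultFree (evenPairStabilizer Y) := by
  classical
  refine isMultFree_of_inv_mem_doubleCoset fun g => ?_
  obtain ⟨ι, _, m, _, Ψ, Ω, hΨ, hΩ, hg⟩ := exists_apply_eq_shear g
  refine inv_mem_doubleCoset_evenPairStabilizer hΨ hΩ hg (exists_reversesShear ?_)
  rintro ⟨hinj, hm⟩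
  obtain ⟨η, -⟩ := exists_semiconj_fst_of_semiconj_sheetSwap hΨ
  refine hY (Finset.univ.image m) (by simpa using hm) ?_
  rw [Finset.sum_image hinj.injOn, ← Fintype.card_congr η, Fintype.card_sigma]
  exact Finset.sum_congr rfl fun i _ => (ZMod.card (m i)).symm

lemma exists_finset_mod_four_eq_one_sum_eq {k : ℕ} (hk : 25 ≤ k) :
    ∃ S : Finset ℕ, (∀ m ∈ S, m % 4 = 1) ∧ ∑ m ∈ S, m = k := by
  obtain h | h | h | h : k % 4 = 0 ∨ k % 4 = 1 ∨ k % 4 = 2 ∨ k % 4 = 3 := by omega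
  · refine ⟨{1, 5, 9, k - 15}, by grind, ?_⟩
    simp (disch := grind) only [Finset.sum_insert, Finset.sum_singleton]
    omega
  · exact ⟨{k}, by simpa using h, Finset.sum_singleton _ _⟩
  · refine ⟨{1, k - 1}, by grind, ?_⟩
    rw [Finset.sum_pair (by omega)]
    omega
  · refine ⟨{1, 5, k - 6}, by grind, ?_⟩
    simp (disch := grind) only [Finset.sum_insert, Finset.sum_singleton]
    omega

lemma sum_ne_twenty_four {S : Finset ℕ} (hS : ∀ m ∈ S, m % 4 = 1) : ∑ m ∈ S, m ≠ 24 := by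
  intro hsum
  have hmem : S ∈ ((Finset.range 25).filter (· % 4 = 1)).powerset := by
    refine Finset.mem_powerset.2 fun m hm => Finset.mem_filter.2 ⟨?_, hS m hm⟩
    have := Finset.single_le_sum (f := id) (fun _ _ => Nat.zero_le _) hm
    exact Finset.mem_range.2 (Nat.lt_succ_of_le (this.trans_eq hsum))
  have hno : ∀ T ∈ ((Finset.range 25).filter (· % 4 = 1)).powerset, ∑ m ∈ T, m ≠ 24 := by decide
  exact hno S hmem hsum

theorem stmt12_general {k : ℕ} (hk : 2 ≤ k) {H : Subgroup (Perm (Fin (2 * k)))}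
    (hH : ∀ g, g ∈ H ↔ ∃ σ : Perm (Fin k), InducedPairPerm g σ ∧ sign σ = 1) :
    IsMultFree H ↔ ∀ S : Finset ℕ, (∀ m ∈ S, m % 4 = 1) → ∑ m ∈ S, m ≠ k := by
  refine ⟨fun hfree S hS hsum => ?_, fun h => ?_⟩
  · have (m : S) : NeZero (m : ℕ) := ⟨fun h => by simpa [h] using hS m m.2⟩
    have hcard : Fintype.card (Σ m : S, ZMod m) = k := by
      rw [Fintype.card_sigma, ← hsum, ← Finset.sum_coe_sort S]
      exact Finset.sum_congr rfl fun m _ => ZMod.card m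
    have : Nontrivial (Σ m : S, ZMod m) := Fintype.one_lt_card_iff_nontrivial.1 (by omega)
    exact not_isMultFree_evenPairStabilizer Subtype.val_injective (fun m => hS m m.2)
      ((isMultFree_iff_evenPairStabilizer hcard hH).1 hfree)
  · refine (isMultFree_iff_evenPairStabilizer (Fintype.card_fin k) hH).2
      (isMultFree_evenPairStabilizer ?_)
    rwa [Fintype.card_fin]

theorem stmt12 :
    (∀ k : ℕ, 25 ≤ k →
      ∀ H : Subgroup (Equiv.Perm (Fin (2 * k))),
        (∀ g : Equiv.Perm (Fin (2 * k)), g ∈ H ↔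
          ∃ σ : Equiv.Perm (Fin k), InducedPairPerm g σ ∧ Equiv.Perm.sign σ = 1) →
        ¬ IsMultFree H) ∧
    (∀ H : Subgroup (Equiv.Perm (Fin (2 * 24))),
      (∀ g : Equiv.Perm (Fin (2 * 24)), g ∈ H ↔
        ∃ σ : Equiv.Perm (Fin 24), InducedPairPerm g σ ∧ Equiv.Perm.sign σ = 1) →
      IsMultFree H) := by
  refine ⟨fun k hk H hH h => ?_, fun H hH => ?_⟩
  · obtain ⟨S, hS, hsum⟩ := exists_finset_mod_four_eq_one_sum_eq hk
    exact (stmt12_general (by omega) hH).1 h S hS hsum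
  · exact (stmt12_general (by norm_num) hH).2 fun S hS => sum_ne_twenty_four hS
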